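/- Let θ ∈ (0,1), let 𝒜 be a nonempty set and let A, B : 𝒜 → [0,∞). Suppose that for every u ∈ ℝ there is a bijection G_u : 𝒜 → 𝒜 such that A(G_u F) = e^{−uθ} A(F) and B(G_u F) = e^{u(1−θ)} B(F) for every F ∈ 𝒜. Then inf_{F ∈ 𝒜} ((1−θ) A(F) + θ B(F)) = inf_{F ∈ 𝒜} A(F)^{1−θ} B(F)^{θ}. -/

import Mathlib

/-!
For `a, b ≥ 0` the mean `a ^ (1 - θ) * b ^ θ` is unchanged when `a, b` are replaced by
`e ^ (-uθ) a, e ^ (u(1 - θ)) b`, so by AM-GM it is at most the weighted arithmetic mean of every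
such pair. If `a, b > 0`, the choice `u = log a - log b` makes the two rescaled numbers equal, and
AM-GM is then an equality; zero values are reached by letting `ε → 0` in `a + ε, b + ε`. Hence the
geometric mean is the infimum over `u` of the rescaled arithmetic means, and taking the infimum
over a family stable under the rescalings makes the extra infimum over `u` invisible.
-/

open Filter Set Topology

section ExpScaling

variable {a b θ : ℝ}

theorem geom_mean_exp_scaling (ha : 0 ≤ a) (hb : 0 ≤ b) (u : ℝ) :
    (Real.exp (-u * θ) * a) ^ (1 - θ) * (Real.exp (u * (1 - θ)) * b) ^ θ =
      a ^ (1 - θ) * b ^ θ := by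
  have exp_cancel : Real.exp (-u * θ * (1 - θ)) * Real.exp (u * (1 - θ) * θ) = 1 := by
    rw [← Real.exp_add, Real.exp_eq_one_iff]
    ring
  rw [Real.mul_rpow (Real.exp_nonneg _) ha, Real.mul_rpow (Real.exp_nonneg _) hb,
    ← Real.exp_mul, ← Real.exp_mul, mul_mul_mul_comm, exp_cancel, one_mul]

theorem exists_exp_scaling_eq_geom_mean (θ : ℝ) (ha : 0 < a) (hb : 0 < b) :
    ∃ u : ℝ, Real.exp (-u * θ) * a = a ^ (1 - θ) * b ^ θ ∧
      Real.exp (u * (1 - θ)) * b = a ^ (1 - θ) * b ^ θ := by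
  obtain ⟨x, rfl⟩ : ∃ x, Real.exp x = a := ⟨_, Real.exp_log ha⟩
  obtain ⟨y, rfl⟩ : ∃ y, Real.exp y = b := ⟨_, Real.exp_log hb⟩
  refine ⟨x - y, ?_, ?_⟩ <;>
  · simp only [← Real.exp_mul, ← Real.exp_add]
    ring_nf

theorem tendsto_geom_mean_add_nhdsGT_zero (hθ0 : 0 ≤ θ) (hθ1 : θ ≤ 1) (a b : ℝ) :
    Tendsto (fun ε : ℝ => (a + ε) ^ (1 - θ) * (b + ε) ^ θ) (𝓝[>] 0)
      (𝓝 (a ^ (1 - θ) * b ^ θ)) := by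
  have hcont : Continuous fun ε : ℝ => (a + ε) ^ (1 - θ) * (b + ε) ^ θ :=
    ((continuous_const_add a).rpow_const fun _ => Or.inr (sub_nonneg.2 hθ1)).mul
      ((continuous_const_add b).rpow_const fun _ => Or.inr hθ0)
  simpa only [add_zero] using (hcont.tendsto 0).mono_left nhdsWithin_le_nhds

theorem isGLB_range_arith_mean_exp_scaling (hθ0 : 0 ≤ θ) (hθ1 : θ ≤ 1) (ha : 0 ≤ a)
    (hb : 0 ≤ b) :
    IsGLB (range fun u : ℝ =>
        (1 - θ) * (Real.exp (-u * θ) * a) + θ * (Real.exp (u * (1 - θ)) * b))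
      (a ^ (1 - θ) * b ^ θ) := by
  have hθ1' : 0 ≤ 1 - θ := sub_nonneg.2 hθ1
  constructor
  · rintro _ ⟨u, rfl⟩
    rw [← geom_mean_exp_scaling ha hb u]
    exact Real.geom_mean_le_arith_mean2_weighted hθ1' hθ0 (by positivity) (by positivity)
      (sub_add_cancel 1 θ)
  · intro c hc
    refine ge_of_tendsto (tendsto_geom_mean_add_nhdsGT_zero hθ0 hθ1 a b) ?_
    filter_upwards [self_mem_nhdsWithin] with ε (hε : 0 < ε)
    obtain ⟨u, hu_left, hu_right⟩ :=
      exists_exp_scaling_eq_geom_mean θ (add_pos_of_nonneg_of_pos ha hε)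
        (add_pos_of_nonneg_of_pos hb hε)
    calc c ≤ (1 - θ) * (Real.exp (-u * θ) * a) + θ * (Real.exp (u * (1 - θ)) * b) := hc ⟨u, rfl⟩
      _ ≤ (1 - θ) * (Real.exp (-u * θ) * (a + ε)) +
          θ * (Real.exp (u * (1 - θ)) * (b + ε)) := by
        gcongr <;> exact le_add_of_nonneg_right hε.le
      _ = (a + ε) ^ (1 - θ) * (b + ε) ^ θ := by
        rw [hu_left, hu_right]
        ring

end ExpScaling

theorem inf_convex_combination_eq_inf_geometric_general
    {θ : ℝ} (hθ0 : 0 ≤ θ) (hθ1 : θ ≤ 1)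
    {𝒜 : Sort*} [Nonempty 𝒜] (A B : 𝒜 → ℝ)
    (hA : ∀ F, 0 ≤ A F) (hB : ∀ F, 0 ≤ B F)
    (hscale : ∀ (u : ℝ) (F : 𝒜), ∃ F', A F' ≤ Real.exp (-u * θ) * A F ∧
      B F' ≤ Real.exp (u * (1 - θ)) * B F) :
    (⨅ F, ((1 - θ) * A F + θ * B F)) = ⨅ F, (A F) ^ (1 - θ) * (B F) ^ θ := by
  have hglb F := isGLB_range_arith_mean_exp_scaling hθ0 hθ1 (hA F) (hB F)
  have geom_nonneg F : 0 ≤ A F ^ (1 - θ) * B F ^ θ :=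
    mul_nonneg (Real.rpow_nonneg (hA F) _) (Real.rpow_nonneg (hB F) _)
  have geom_le_arith F : A F ^ (1 - θ) * B F ^ θ ≤ (1 - θ) * A F + θ * B F :=
    (hglb F).1 ⟨0, by simp⟩
  apply le_antisymm
  · refine le_ciInf fun F => (hglb F).2 ?_
    rintro _ ⟨u, rfl⟩
    obtain ⟨F', hAF', hBF'⟩ := hscale u F
    calc (⨅ F, ((1 - θ) * A F + θ * B F))
      _ ≤ (1 - θ) * A F' + θ * B F' :=
        ciInf_le ⟨0, forall_mem_range.2 fun F => (geom_nonneg F).trans (geom_le_arith F)⟩ F'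
      _ ≤ (1 - θ) * (Real.exp (-u * θ) * A F) + θ * (Real.exp (u * (1 - θ)) * B F) :=
        add_le_add (mul_le_mul_of_nonneg_left hAF' (sub_nonneg.2 hθ1))
          (mul_le_mul_of_nonneg_left hBF' hθ0)
  · exact ciInf_mono ⟨0, forall_mem_range.2 geom_nonneg⟩ geom_le_arith

/-- Lemma 1 (abstract core): if `A, B : 𝒜 → [0,∞)` and for every `u ∈ ℝ` there is a
bijection `G_u` of `𝒜` scaling `A` by `e^{-uθ}` and `B` by `e^{u(1-θ)}`, then
`inf ((1-θ) A + θ B) = inf (A^{1-θ} B^θ)`. -/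
theorem inf_convex_combination_eq_inf_geometric
    {θ : ℝ} (hθ0 : 0 < θ) (hθ1 : θ < 1)
    {𝒜 : Type*} [Nonempty 𝒜] (A B : 𝒜 → ℝ)
    (hA : ∀ F, 0 ≤ A F) (hB : ∀ F, 0 ≤ B F)
    (hG : ∀ u : ℝ, ∃ G : 𝒜 → 𝒜, Function.Bijective G ∧
      ∀ F, A (G F) = Real.exp (-u * θ) * A F ∧
           B (G F) = Real.exp (u * (1 - θ)) * B F) :
    (⨅ F, ((1 - θ) * A F + θ * B F)) = ⨅ F, (A F) ^ (1 - θ) * (B F) ^ θ := by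
  exact inf_convex_combination_eq_inf_geometric_general hθ0.le hθ1.le A B hA hB fun u F =>
    let ⟨G, _, hGF⟩ := hG u; ⟨G F, (hGF F).1.le, (hGF F).2.le⟩
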